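/- Let y ~ N(0, Id + λ x x^⊤) in R^d with |λ|·‖x‖² ≤ 1, and let H_α be the multivariate probabilists' Hermite polynomial indexed by a multi-index α over [d]. If |α| is odd then E[H_α(y)] = 0, and if |α| is even then E[H_α(y)] = (|α|−1)!! · λ^{|α|/2} · x^α, where x^α = ∏_i x_i^{α_i}. -/

import Mathlib

open MeasureTheory ProbabilityTheory

lemma gm_rec (s : NNReal) (n : ℕ) (t : ℝ) :
    ∫ z, z ^ (n+2) * Real.exp (t * z) ∂(gaussianReal 0 s) =
      s * t * ∫ z, z ^ (n+1) * Real.exp (t * z) ∂(gaussianReal 0 s) +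
      (n+1) * s * ∫ z, z ^ n * Real.exp (t * z) ∂(gaussianReal 0 s) := by
  have hd : ∀ n (t : ℝ), HasDerivAt (fun t => ∫ z, z ^ n * Real.exp (t * z) ∂(gaussianReal 0 s))
      (∫ z, z ^ (n+1) * Real.exp (t * z) ∂(gaussianReal 0 s)) t := by
    intro n t
    exact hasDerivAt_integral_pow_mul_exp_real (X := fun z => z) (by
      rw [integrableExpSet_fun_id_gaussianReal]; simp) n
  have h0 : ∀ t : ℝ, ∫ z, z ^ 0 * Real.exp (t * z) ∂(gaussianReal 0 s) = Real.exp (s * t ^ 2 / 2) := by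
    intro t
    have := congrFun (mgf_fun_id_gaussianReal (μ := 0) (v := s)) t
    simpa [mgf] using this
  have h1 : ∀ t : ℝ, ∫ z, z ^ 1 * Real.exp (t * z) ∂(gaussianReal 0 s) =
      s * t * Real.exp (s * t ^ 2 / 2) := by
    intro t
    have a := hd 0 t
    rw [funext h0] at a
    have b : HasDerivAt (fun t : ℝ => Real.exp (s * t ^ 2 / 2)) (Real.exp (s * t ^ 2 / 2) * (s * (2 * t) / 2)) t := by
      simpa using ((((hasDerivAt_id t).pow 2).const_mul (s:ℝ)).div_const 2).exp
    rw [a.unique b]; ring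
  induction n generalizing t with
  | zero =>
    have a := hd 1 t
    rw [funext h1] at a
    have b : HasDerivAt (fun t : ℝ => s * t * Real.exp (s * t ^ 2 / 2))
        (s * Real.exp (s * t ^ 2 / 2) + s * t * (Real.exp (s * t ^ 2 / 2) * (s * (2 * t) / 2))) t := by
      have := ((((hasDerivAt_id t).pow 2).const_mul (s:ℝ)).div_const 2).exp
      have := ((hasDerivAt_id t).const_mul (s:ℝ)).mul this
      simp at this
      exact this
    rw [zero_add, zero_add, h1, h0, a.unique b]; push_cast; ring
  | succ n ih =>
    have a := hd (n+2) t
    rw [funext ih] at a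
    have b := (((hasDerivAt_id t).const_mul (s:ℝ)).mul (hd (n+1) t)).add
      ((hd n t).const_mul ((n+1) * (s:ℝ)))
    have := a.unique b
    rw [show n + 1 + 2 = n + 2 + 1 by ring, this]; simp; ring

lemma gm_even (s : NNReal) (k : ℕ) :
    ∫ z, z ^ (2*k) ∂(gaussianReal 0 s) = (Nat.doubleFactorial (2*k-1) : ℝ) * (s:ℝ)^k := by
  induction k with
  | zero => simp
  | succ k ih =>
    have := gm_rec s (2*k) 0
    simp only [zero_mul, Real.exp_zero, mul_one, mul_zero, zero_add] at this
    rw [show 2 * (k+1) = 2*k+2 by ring, this, ih]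
    rcases k with _ | k
    · simp
    · rw [show 2 * (k+1) + 2 - 1 = (2 * (k + 1) - 1) + 2 by omega, Nat.doubleFactorial_add_two,
        show 2 * (k+1) - 1 = 2*k+1 by omega]
      push_cast; ring

lemma gm_odd (s : NNReal) (k : ℕ) : ∫ z, z ^ (2*k+1) ∂(gaussianReal 0 s) = 0 := by
  induction k with
  | zero => simp [integral_id_gaussianReal]
  | succ k ih =>
    have := gm_rec s (2*k+1) 0
    simp only [zero_mul, Real.exp_zero, mul_one, mul_zero, zero_add] at this
    rw [show 2 * (k+1) + 1 = 2*k+1+2 by ring, this, ih]; simp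

open MvPolynomial in
lemma span_lemma {d : ℕ} (D : MvPolynomial (Fin d) ℝ →ₗ[ℝ] ℝ)
    (h : ∀ (v : Fin d → ℝ) n, D ((∑ i, C (v i) * X i) ^ n) = 0) : D = 0 := by
  refine MvPolynomial.linearMap_ext fun a => LinearMap.ext_ring ?_
  simp only [LinearMap.comp_apply, LinearMap.zero_apply]
  classical
  set n := ∑ i, a i with hn
  let p : MvPolynomial (Fin d) ℝ := ∑ k ∈ Finset.piAntidiag Finset.univ n,
    monomial (Finsupp.equivFunOnFinite.symm k)
      ((Nat.multinomial Finset.univ k : ℝ) * D (monomial (Finsupp.equivFunOnFinite.symm k) 1))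
  have hp : p = 0 := by
    apply MvPolynomial.funext
    intro v
    rw [map_zero, ← h v n, Finset.sum_pow_eq_sum_piAntidiag, map_sum, map_sum]
    refine Finset.sum_congr rfl fun k _ => ?_
    have : (Nat.multinomial Finset.univ k : MvPolynomial (Fin d) ℝ) * ∏ i, (C (v i) * X i) ^ k i
       = ((Nat.multinomial Finset.univ k : ℝ) * ∏ i, v i ^ k i) •
          monomial (Finsupp.equivFunOnFinite.symm k) 1 := by
      rw [MvPolynomial.smul_eq_C_mul, MvPolynomial.monomial_eq]
      simp [mul_pow, Finset.prod_mul_distrib, Finsupp.prod_fintype, mul_assoc]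
    rw [this, map_smul, eval_monomial]
    simp [Finsupp.prod_fintype]; ring
  have hc := congrArg (coeff a) hp
  rw [coeff_zero, coeff_sum, Finset.sum_eq_single (⇑a)] at hc
  · rw [show Finsupp.equivFunOnFinite.symm (⇑a) = a by ext; simp] at hc
    simp only [coeff_monomial, if_true] at hc
    rcases mul_eq_zero.mp hc with h' | h'
    · exact absurd h' (by exact_mod_cast (Nat.multinomial_pos _ _).ne')
    · exact h'
  · intro b _ hb
    rw [coeff_monomial, if_neg]
    intro hh; apply hb; rw [← hh]; ext; simp
  · intro hh; exact absurd (by simp [hn]) hh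

lemma deriv_hermite (n : ℕ) : Polynomial.derivative (Polynomial.hermite n) =
    (n : Polynomial ℤ) * Polynomial.hermite (n-1) := by
  induction n with
  | zero => simp
  | succ n ih =>
    rw [Polynomial.hermite_succ, ih]
    rcases n with _ | n
    · simp
    · have h := Polynomial.hermite_succ n
      rw [Nat.add_sub_cancel] at ih
      rw [Nat.add_sub_cancel, Nat.add_sub_cancel, Polynomial.derivative_sub,
        Polynomial.derivative_mul, Polynomial.derivative_mul, ih,
        Polynomial.derivative_X, Polynomial.derivative_natCast]
      push_cast
      linear_combination (-((n : Polynomial ℤ) + 1)) * h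

open MvPolynomial in
/-- multivariate Hermite polynomial -/
noncomputable def mvH {d : ℕ} (α : Fin d → ℕ) : MvPolynomial (Fin d) ℝ :=
  ∏ i, Polynomial.aeval (X i) (Polynomial.hermite (α i))

open MvPolynomial in
lemma pderiv_aeval_X {d : ℕ} (i j : Fin d) (p : Polynomial ℤ) :
    pderiv j (Polynomial.aeval (X i : MvPolynomial (Fin d) ℝ) p) =
      Polynomial.aeval (X i) (Polynomial.derivative p) * pderiv j (X i) := by
  rw [← Polynomial.aeval_map_algebraMap ℝ, Derivation.map_aeval,
    Polynomial.derivative_map, smul_eq_mul, Polynomial.aeval_map_algebraMap ℝ]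

open MvPolynomial in
lemma pderiv_prod_zero {d : ℕ} (j : Fin d) (s : Finset (Fin d)) (f : Fin d → MvPolynomial (Fin d) ℝ)
    (h : ∀ i ∈ s, pderiv j (f i) = 0) : pderiv j (∏ i ∈ s, f i) = 0 := by
  classical
  induction s using Finset.induction_on with
  | empty => simp
  | insert a s ha ih =>
    rw [Finset.prod_insert ha, pderiv_mul, h a (by simp), ih (fun i hi => h i (by simp [hi]))]
    simp

open MvPolynomial in
lemma pderiv_mvH' {d : ℕ} (α : Fin d → ℕ) (j : Fin d) :
    pderiv j (mvH α) = Polynomial.aeval (X j) (Polynomial.derivative (Polynomial.hermite (α j))) *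
      ∏ i ∈ Finset.univ.erase j, Polynomial.aeval (X i) (Polynomial.hermite (α i)) := by
  rw [mvH, ← Finset.mul_prod_erase Finset.univ _ (Finset.mem_univ j), pderiv_mul,
    pderiv_prod_zero j (Finset.univ.erase j), pderiv_aeval_X]
  · simp
  · intro i hi
    rw [pderiv_aeval_X, pderiv_X_of_ne (Finset.ne_of_mem_erase hi)]; simp

open MvPolynomial in
lemma pderiv_mvH {d : ℕ} (α : Fin d → ℕ) (j : Fin d) :
    pderiv j (mvH α) = (α j : ℝ) • mvH (α - Pi.single j 1) := by
  rw [pderiv_mvH', deriv_hermite, mvH,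
    ← Finset.mul_prod_erase Finset.univ _ (Finset.mem_univ j), MvPolynomial.smul_eq_C_mul]
  rw [Finset.prod_congr rfl (g := fun i => Polynomial.aeval (X i : MvPolynomial (Fin d) ℝ)
    (Polynomial.hermite ((α - Pi.single j 1 : Fin d → ℕ) i)))]
  · simp [mul_assoc]
  · intro i hi
    simp [Finset.ne_of_mem_erase hi]

open MvPolynomial in
lemma mvH_add {d : ℕ} (α : Fin d → ℕ) (j : Fin d) :
    mvH (α + Pi.single j 1) = X j * mvH α - pderiv j (mvH α) := by
  rw [pderiv_mvH', mvH, mvH, ← Finset.mul_prod_erase Finset.univ _ (Finset.mem_univ j),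
    ← Finset.mul_prod_erase Finset.univ _ (Finset.mem_univ j)]
  rw [Finset.prod_congr rfl (g := fun i => Polynomial.aeval (X i : MvPolynomial (Fin d) ℝ)
    (Polynomial.hermite (α i)))]
  · simp; ring
  · intro i hi
    simp [Finset.ne_of_mem_erase hi]

/-- values -/
noncomputable def hval (lam : ℝ) (n : ℕ) : ℝ :=
  if Even n then (Nat.doubleFactorial (n-1) : ℝ) * lam ^ (n/2) else 0

lemma hval_rec (lam : ℝ) (n : ℕ) : hval lam (n+2) = lam * (n+1) * hval lam n := by
  unfold hval
  by_cases h : Even n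
  · rw [if_pos h, if_pos (by simpa [Nat.even_add] using h)]
    rw [show (n+2)/2 = n/2+1 by omega, pow_succ]
    rcases n with _ | n
    · simp
    · rw [show n + 1 + 2 - 1 = n + 2 by omega, Nat.doubleFactorial_add_two]
      simp; ring
  · rw [if_neg h, if_neg (by simpa [Nat.even_add] using h)]; simp

open MvPolynomial in
lemma main_alg {d : ℕ} (x : Fin d → ℝ) (lam : ℝ) (L : MvPolynomial (Fin d) ℝ →ₗ[ℝ] ℝ)
    (h1 : L 1 = 1)
    (hS : ∀ i f, L (X i * f) = L (pderiv i f) + lam * x i * ∑ j, x j * L (pderiv j f)) 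
    (n : ℕ) : ∀ (α : Fin d → ℕ), ∑ i, α i = n → L (mvH α) = hval lam n * ∏ i, x i ^ α i := by
  induction n using Nat.strong_induction_on with
  | _ n ih =>
  intro α hα
  rcases n with _ | n
  · have : α = 0 := by
      ext i; simp at hα; simp [hα i]
    subst this
    simp [mvH, hval, h1]
  · obtain ⟨i, hi⟩ : ∃ i, α i ≠ 0 := by
      by_contra! hc; simp [hc] at hα
    obtain ⟨β, rfl⟩ : ∃ β : Fin d → ℕ, α = β + Pi.single i 1 := by
      refine ⟨α - Pi.single i 1, ?_⟩
      ext k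
      by_cases hk : k = i
      · subst hk; simp; omega
      · simp [hk]
    have hβ : ∑ k, β k = n := by
      simp [Finset.sum_add_distrib] at hα; exact hα
    have hpx : ∏ k, x k ^ (β + Pi.single i 1 : Fin d → ℕ) k = x i * ∏ k, x k ^ β k := by
      simp only [Pi.add_apply, pow_add, Finset.prod_mul_distrib]
      rw [mul_comm]; congr 1
      rw [Finset.prod_eq_single i] <;> simp +contextual
    rw [mvH_add, map_sub, hS, hpx]
    rcases n with _ | n
    · have : ∀ k, β k = 0 := by simpa using hβ
      simp [pderiv_mvH, this, hval]
    · have key : ∀ j, x j * L (pderiv j (mvH β)) = β j * (hval lam n * ∏ k, x k ^ β k) := by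
        intro j
        rw [pderiv_mvH, map_smul, smul_eq_mul]
        by_cases hj : β j = 0
        · simp [hj]
        obtain ⟨γ, rfl⟩ : ∃ γ : Fin d → ℕ, β = γ + Pi.single j 1 := by
          refine ⟨β - Pi.single j 1, ?_⟩
          ext k
          by_cases hk : k = j
          · subst hk; simp; omega
          · simp [hk]
        have hγ : ∑ k, γ k = n := by
          simp [Finset.sum_add_distrib] at hβ; exact hβ
        have hpx : ∏ k, x k ^ (γ + Pi.single j 1 : Fin d → ℕ) k = x j * ∏ k, x k ^ γ k := by
          simp only [Pi.add_apply, pow_add, Finset.prod_mul_distrib]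
          rw [mul_comm]; congr 1
          rw [Finset.prod_eq_single j] <;> simp +contextual
        rw [hpx, add_tsub_cancel_right, ih n (by omega) γ hγ]; ring
      simp only [key]
      rw [← Finset.sum_mul, ← Nat.cast_sum, hβ, hval_rec]
      push_cast; ring

open MvPolynomial in
lemma stein {d : ℕ} (x : Fin d → ℝ) (lam : ℝ) (L : MvPolynomial (Fin d) ℝ →ₗ[ℝ] ℝ)
    (he : ∀ (v : Fin d → ℝ) k, L ((∑ i, C (v i) * X i) ^ (2*k)) =
      (Nat.doubleFactorial (2*k-1) : ℝ) * (∑ i, v i ^ 2 + lam * (∑ i, v i * x i) ^ 2) ^ k)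
    (ho : ∀ (v : Fin d → ℝ) k, L ((∑ i, C (v i) * X i) ^ (2*k+1)) = 0) (i f) :
    L (X i * f) = L (pderiv i f) + lam * x i * ∑ j, x j * L (pderiv j f) := by
  let D : MvPolynomial (Fin d) ℝ →ₗ[ℝ] ℝ :=
    L ∘ₗ LinearMap.mulLeft ℝ (X i) - L ∘ₗ (pderiv i).toLinearMap -
      (lam * x i) • ∑ j, x j • (L ∘ₗ (pderiv j).toLinearMap)
  have hD : ∀ f, D f = L (X i * f) - L (pderiv i f) - lam * x i * ∑ j, x j * L (pderiv j f) := by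
    intro f; simp [D]
  suffices D = 0 by
    have := hD f
    rw [‹D = 0›] at this
    simp at this; linarith
  apply span_lemma
  intro v n
  have hpd : ∀ j, pderiv j (∑ i, C (v i) * X i : MvPolynomial (Fin d) ℝ) = C (v j) := by
    intro j
    rw [map_sum, Finset.sum_eq_single j]
    · simp
    · intro b _ hb; rw [pderiv_C_mul, pderiv_X_of_ne hb]; simp
    · simp
  have hpdn : ∀ j, L (pderiv j ((∑ i, C (v i) * X i) ^ n)) = 
      v j * (n * L ((∑ i, C (v i) * X i) ^ (n-1))) := by
    intro j
    have : (n : MvPolynomial (Fin d) ℝ) * (∑ i, C (v i) * X i) ^ (n-1) * C (v j) =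
        (v j * n) • (∑ i, C (v i) * X i) ^ (n-1) := by
      rw [MvPolynomial.smul_eq_C_mul]; simp; ring
    rw [pderiv_pow, hpd, this, map_smul, smul_eq_mul, mul_assoc]
  rw [hD]
  simp only [hpdn]
  -- derivative
  set l : MvPolynomial (Fin d) ℝ := ∑ i, C (v i) * X i with hl
  have hline : ∀ t : ℝ, C t * X i + l =
      (∑ k, C ((t • Pi.single i 1 + v : Fin d → ℝ) k) * X k : MvPolynomial (Fin d) ℝ) := by
    intro t
    simp only [hl, Pi.add_apply, Pi.smul_apply, map_add, add_mul, Finset.sum_add_distrib]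
    congr 1
    rw [Finset.sum_eq_single i] <;> simp +contextual
  have hder : HasDerivAt (fun t : ℝ => L ((C t * X i + l) ^ (n+1))) ((n+1) * L (X i * l ^ n)) 0 := by
    have h1 : ∀ t : ℝ, L ((C t * X i + l) ^ (n+1)) =
        ∑ m ∈ Finset.range (n+2), t ^ m * ((n+1).choose m * L (X i ^ m * l ^ (n + 1 - m))) := by
      intro t
      rw [add_pow, map_sum]
      refine Finset.sum_congr rfl fun m _ => ?_
      have : (C t * X i) ^ m * l ^ (n + 1 - m) * ((n+1).choose m : MvPolynomial (Fin d) ℝ) =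
          (t ^ m * (n+1).choose m) • (X i ^ m * l ^ (n + 1 - m)) := by
        rw [MvPolynomial.smul_eq_C_mul]; simp; ring
      rw [this, map_smul, smul_eq_mul, mul_assoc]
    rw [funext h1]
    have := HasDerivAt.fun_sum (x := (0:ℝ)) (u := Finset.range (n+2))
      (A := fun m t => t ^ m * ((n+1).choose m * L (X i ^ m * l ^ (n + 1 - m))))
      (fun m _ => (hasDerivAt_pow m (0:ℝ)).mul_const _)
    refine this.congr_deriv ?_
    rw [Finset.sum_eq_single 1]
    · simp
    · intro b _ hb
      rcases b with _ | _ | b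
      · simp
      · simp at hb
      · simp
    · simp
  have hq : ∀ t : ℝ, (∑ k, (t • Pi.single i 1 + v : Fin d → ℝ) k ^ 2 +
      lam * (∑ k, (t • Pi.single i 1 + v : Fin d → ℝ) k * x k) ^ 2) =
      (∑ k, v k ^ 2 + lam * (∑ k, v k * x k) ^ 2) + t * (2 * (v i + lam * x i * ∑ k, v k * x k)) +
      t ^ 2 * (1 + lam * x i ^ 2) := by
    intro t
    have e1 : ∑ k, (t • Pi.single i 1 + v : Fin d → ℝ) k * x k = t * x i + ∑ k, v k * x k := by
      simp only [Pi.add_apply, add_mul, Finset.sum_add_distrib]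
      congr 1
      rw [Finset.sum_eq_single i] <;> simp +contextual
    have e2 : ∑ k, (t • Pi.single i 1 + v : Fin d → ℝ) k ^ 2 = t ^ 2 + 2 * t * v i + ∑ k, v k ^ 2 := by
      simp only [Pi.add_apply, add_sq, Finset.sum_add_distrib]
      congr 1
      congr 1
      · rw [Finset.sum_eq_single i] <;> simp +contextual
      · rw [Finset.sum_eq_single i] <;> simp +contextual
    rw [e1, e2]; ring
  have hsum : ∑ j, x j * (v j * (n * L (l ^ (n-1)))) = (∑ k, v k * x k) * (n * L (l ^ (n-1))) := by
    rw [Finset.sum_mul]; refine Finset.sum_congr rfl fun j _ => by ring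
  rw [hsum]
  simp only [hline] at hder
  rcases Nat.even_or_odd' n with ⟨k, rfl | rfl⟩
  · simp only [ho] at hder
    have h0 := hder.unique (hasDerivAt_const 0 (0:ℝ))
    have h0 : L (X i * l ^ (2*k)) = 0 := by
      rcases mul_eq_zero.mp h0 with h | h
      · exact absurd h (by positivity)
      · exact h
    rcases k with _ | k
    · rw [h0]; simp
    · rw [h0, show 2 * (k+1) - 1 = 2*k+1 by omega, ho]; simp
  · have e : 2 * k + 1 + 1 = 2 * (k+1) := by ring
    simp only [e, he, hq] at hder
    rw [Nat.add_sub_cancel, he]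
    set σ := ∑ k, v k ^ 2 + lam * (∑ k, v k * x k) ^ 2
    set B := 2 * (v i + lam * x i * ∑ k, v k * x k) with hB
    have h2 : HasDerivAt (fun t : ℝ => σ + t * B + t ^ 2 * (1 + lam * x i ^ 2)) B 0 := by
      have := (((hasDerivAt_id (0:ℝ)).mul_const B).const_add σ).add
        ((hasDerivAt_pow 2 (0:ℝ)).mul_const (1 + lam * x i ^ 2))
      simp at this
      exact this
    have h3 := hder.unique ((h2.pow (k+1)).const_mul _)
    have hdf : (Nat.doubleFactorial (2*(k+1)-1) : ℝ) = (2*k+1) * Nat.doubleFactorial (2*k-1) := by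
      rcases k with _ | k
      · simp
      · rw [show 2 * (k+1+1) - 1 = (2 * (k + 1) - 1) + 2 by omega, Nat.doubleFactorial_add_two,
          show 2 * (k+1) - 1 = 2*k+1 by omega]
        push_cast; ring
    rw [hdf] at h3
    simp at h3
    have hk : (2 * (k:ℝ) + 1 + 1) ≠ 0 := by positivity
    apply mul_left_cancel₀ hk
    push_cast
    rw [hB] at h3
    linear_combination h3

open MvPolynomial in
theorem stmt6 {Ω : Type*} [MeasurableSpace Ω] (P : Measure Ω) [IsProbabilityMeasure P]
    {d : ℕ} (x : Fin d → ℝ) (lam : ℝ) (hx : |lam| * ∑ i, x i ^ 2 ≤ 1)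
    (y : Ω → Fin d → ℝ)
    (hy : ∀ v : Fin d → ℝ,
      Measure.map (fun ω => ∑ i, v i * y ω i) P =
        gaussianReal 0 (Real.toNNReal (∑ i, v i ^ 2 + lam * (∑ i, v i * x i) ^ 2)))
    (α : Fin d → ℕ) :
    (Odd (∑ i, α i) →
      ∫ ω, ∏ i, Polynomial.aeval (y ω i) (Polynomial.hermite (α i)) ∂P = 0) ∧
    (Even (∑ i, α i) →
      ∫ ω, ∏ i, Polynomial.aeval (y ω i) (Polynomial.hermite (α i)) ∂P =
        (Nat.doubleFactorial (∑ i, α i - 1) : ℝ) * lam ^ ((∑ i, α i) / 2) *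
          ∏ i, x i ^ α i) := by
  have hσ : ∀ v : Fin d → ℝ, 0 ≤ ∑ i, v i ^ 2 + lam * (∑ i, v i * x i) ^ 2 := by
    intro v
    have hcs := Finset.sum_mul_sq_le_sq_mul_sq Finset.univ v x
    have hv : 0 ≤ ∑ i, v i ^ 2 := Finset.sum_nonneg fun i _ => sq_nonneg _
    have h1 : |lam| * (∑ i, v i * x i) ^ 2 ≤ |lam| * ((∑ i, v i ^ 2) * ∑ i, x i ^ 2) :=
      mul_le_mul_of_nonneg_left hcs (abs_nonneg _)
    have h2 : (∑ i, v i ^ 2) * (|lam| * ∑ i, x i ^ 2) ≤ (∑ i, v i ^ 2) * 1 :=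
      mul_le_mul_of_nonneg_left hx hv
    have h3 : -|lam| * (∑ i, v i * x i) ^ 2 ≤ lam * (∑ i, v i * x i) ^ 2 :=
      mul_le_mul_of_nonneg_right (neg_abs_le _) (sq_nonneg _)
    linarith
  have hae : ∀ v : Fin d → ℝ, AEMeasurable (fun ω => ∑ i, v i * y ω i) P := by
    intro v
    apply AEMeasurable.of_map_ne_zero
    rw [hy v]
    exact IsProbabilityMeasure.ne_zero _
  have hcoord : ∀ i (ω : Ω), ∑ k, (Pi.single i 1 : Fin d → ℝ) k * y ω k = y ω i := by
    intro i ω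
    rw [Finset.sum_eq_single i] <;> simp +contextual
  have hmem : ∀ (f : MvPolynomial (Fin d) ℝ) (p : NNReal), MemLp (fun ω => eval (y ω) f) p P := by
    intro f
    induction f using MvPolynomial.induction_on with
    | C a => intro p; simpa using memLp_const a
    | add f g hf hg => intro p; simp only [map_add]; exact (hf p).add (hg p)
    | mul_X f i hf =>
      intro p
      have hX : ∀ p : NNReal, MemLp (fun ω => y ω i) p P := by
        intro p
        have h := memLp_id_gaussianReal (μ := 0) (v := Real.toNNReal (∑ k, (Pi.single i 1 : Fin d → ℝ) k ^ 2 + lam * (∑ k, (Pi.single i 1 : Fin d → ℝ) k * x k) ^ 2)) p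
        rw [← hy, memLp_map_measure_iff (by fun_prop) (hae _)] at h
        simpa only [Function.comp_def, id, hcoord] using h
      have : ENNReal.HolderTriple (2 * p : NNReal) (2 * p : NNReal) p := by
        constructor
        rw [ENNReal.coe_mul, ENNReal.mul_inv (by simp) (by simp), ← add_mul]
        simp [ENNReal.inv_two_add_inv_two]
      simpa using MemLp.mul' (hX (2*p)) (hf (2*p))
  have hint : ∀ f : MvPolynomial (Fin d) ℝ, Integrable (fun ω => eval (y ω) f) P := by
    intro f
    exact memLp_one_iff_integrable.mp (by simpa using hmem f 1)
  let L : MvPolynomial (Fin d) ℝ →ₗ[ℝ] ℝ :=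
    { toFun := fun f => ∫ ω, eval (y ω) f ∂P
      map_add' := fun f g => by
        simp only [map_add]; exact integral_add (hint f) (hint g)
      map_smul' := fun c f => by
        simp only [smul_eval, RingHom.id_apply, smul_eq_mul]; exact integral_const_mul _ _ }
  have hL : ∀ f, L f = ∫ ω, eval (y ω) f ∂P := fun f => rfl
  have hpow : ∀ (v : Fin d → ℝ) n, L ((∑ i, C (v i) * X i) ^ n) =
      ∫ z, z ^ n ∂(gaussianReal 0 (Real.toNNReal (∑ i, v i ^ 2 + lam * (∑ i, v i * x i) ^ 2))) := by
    intro v n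
    rw [← hy, integral_map (hae v) (by fun_prop), hL]
    simp
  have hS := stein x lam L (fun v k => by rw [hpow, gm_even, Real.coe_toNNReal _ (hσ v)])
    (fun v k => by rw [hpow, gm_odd])
  have hm := main_alg x lam L (by rw [hL]; simp) hS _ α rfl
  have hm2 : L (mvH α) = ∫ ω, ∏ i, Polynomial.aeval (y ω i) (Polynomial.hermite (α i)) ∂P := by
    rw [hL]
    congr 1
    ext ω
    rw [mvH, map_prod]
    refine Finset.prod_congr rfl fun i _ => ?_
    have := Polynomial.map_aeval_eq_aeval_map (R := ℤ) (S := MvPolynomial (Fin d) ℝ) (T := ℤ) (U := ℝ) (φ := RingHom.id ℤ) (ψ := eval (y ω)) (Subsingleton.elim _ _) (Polynomial.hermite (α i)) (X i)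
    simpa using this
  rw [← hm2, hm]
  constructor
  · intro h
    rw [hval, if_neg (by simpa using h)]; simp
  · intro h
    rw [hval, if_pos h]
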